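/- arXiv:1809.10907 — 3 statements merged into one kernel-verified Lean document; each statement's English description precedes it below -/
import Mathlib

section
/- Let k ≥ 0 be an even integer, and let M_k(Γ) and S_k(Γ) denote the complex vector spaces of modular forms and cusp forms of weight k for Γ = SL₂(ℤ). Then dim M_k(Γ) = ⌊k/12⌋ if k ≡ 2 (mod 12) and dim M_k(Γ) = ⌊k/12⌋ + 1 otherwise; and dim S_k(Γ) = 0 if k < 12, dim S_k(Γ) = ⌊k/12⌋ − 1 if k ≥ 12 and k ≡ 2 (mod 12), and dim S_k(Γ) = ⌊k/12⌋ if k ≥ 12 and k ≢ 2 (mod 12). -/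
open scoped MatrixGroups

/-- Ranks of modular forms only depend on the level as a subgroup. -/
theorem rank_modularForm_congr {G H : Subgroup (GL (Fin 2) ℝ)} [G.HasDetOne] [H.HasDetOne]
    (h : G = H) (k : ℤ) :
    Module.rank ℂ (ModularForm G k) = Module.rank ℂ (ModularForm H k) := by
  subst h; rfl

/-- Ranks of cusp forms only depend on the level as a subgroup. -/
theorem rank_cuspForm_congr {G H : Subgroup (GL (Fin 2) ℝ)} [G.HasDetOne] [H.HasDetOne]
    (h : G = H) (k : ℤ) :
    Module.rank ℂ (CuspForm G k) = Module.rank ℂ (CuspForm H k) := by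
  subst h; rfl

/-- The dimension formula for level one modular forms, with natural number values. -/
theorem rank_modularForm_levelOne (k : ℕ) (hk : Even k) :
    Module.rank ℂ (ModularForm 𝒮ℒ (k : ℤ)) =
      ((if k % 12 = 2 then k / 12 else k / 12 + 1 : ℕ) : Cardinal) := by
  rw [ModularForm.dimension_level_one k hk]
  by_cases h : k % 12 = 2 <;> simp [Nat.ModEq, h]

/-- The dimension formula for level one cusp forms of weight at least 12. -/
theorem rank_cuspForm_levelOne (k : ℕ) (hk : Even k) (h12 : 12 ≤ k) :
    Module.rank ℂ (CuspForm 𝒮ℒ (k : ℤ)) =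
      ((if k % 12 = 2 then k / 12 - 1 else k / 12 : ℕ) : Cardinal) := by
  rw [CuspForm.discriminantEquiv.rank_eq,
    show ((k : ℤ) - 12 : ℤ) = ((k - 12 : ℕ) : ℤ) by lia,
    rank_modularForm_levelOne (k - 12) (by grind)]
  congr 1
  split_ifs <;> omega

/-- Dimension formulas for the spaces `M_k(Γ)` of modular forms and `S_k(Γ)` of cusp forms of
even weight `k ≥ 0` on `Γ = SL₂(ℤ)`:
`dim M_k = ⌊k/12⌋` if `k ≡ 2 (mod 12)` and `⌊k/12⌋ + 1` otherwise;
`dim S_k = 0` if `k < 12`, `⌊k/12⌋ − 1` if `k ≥ 12`, `k ≡ 2 (mod 12)`, and `⌊k/12⌋` if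
`k ≥ 12`, `k ≢ 2 (mod 12)`. -/
theorem dim_modularForms_cuspForms (k : ℕ) (hk : Even k) :
    (k % 12 = 2 → Module.rank ℂ (ModularForm (⊤ : Subgroup SL(2, ℤ)) (k : ℤ)) = (k / 12 : ℕ)) ∧
    (k % 12 ≠ 2 →
      Module.rank ℂ (ModularForm (⊤ : Subgroup SL(2, ℤ)) (k : ℤ)) = (k / 12 + 1 : ℕ)) ∧
    (k < 12 → Module.rank ℂ (CuspForm (⊤ : Subgroup SL(2, ℤ)) (k : ℤ)) = 0) ∧
    (12 ≤ k → k % 12 = 2 →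
      Module.rank ℂ (CuspForm (⊤ : Subgroup SL(2, ℤ)) (k : ℤ)) = (k / 12 - 1 : ℕ)) ∧
    (12 ≤ k → k % 12 ≠ 2 →
      Module.rank ℂ (CuspForm (⊤ : Subgroup SL(2, ℤ)) (k : ℤ)) = (k / 12 : ℕ)) := by
  have hG : ((⊤ : Subgroup SL(2, ℤ)).map (Matrix.SpecialLinearGroup.mapGL ℝ) :
      Subgroup (GL (Fin 2) ℝ)) = 𝒮ℒ := (MonoidHom.range_eq_map _).symm
  rw [rank_modularForm_congr hG, rank_cuspForm_congr hG, rank_modularForm_levelOne k hk]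
  refine ⟨fun h => by rw [if_pos h], fun h => by rw [if_neg h], fun h => ?_,
    fun h h' => ?_, fun h h' => ?_⟩
  · exact CuspForm.rank_eq_zero_of_weight_lt_twelve (by exact_mod_cast h)
  · rw [rank_cuspForm_levelOne k hk h, if_pos h']
  · rw [rank_cuspForm_levelOne k hk h, if_neg h']
end

section
/- For every τ in the upper half-plane, the Dedekind eta function satisfies η(−1/τ) = (τ/i)^{1/2}·η(τ), where (τ/i)^{1/2} denotes the principal branch of the square root. -/
open Complex UpperHalfPlane

/-- The Dedekind eta function `η(τ) = e^{2πiτ/24}·∏_{n≥1}(1 − q^n)` with `q = e^{2πiτ}`. -/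
noncomputable def dedekindEta (τ : UpperHalfPlane) : ℂ :=
  Complex.exp (2 * (Real.pi : ℂ) * Complex.I * (τ : ℂ) / 24) *
    ∏' n : ℕ, (1 - Complex.exp (2 * (Real.pi : ℂ) * Complex.I * (τ : ℂ)) ^ (n + 1))

/-- `−1/τ` lies in the upper half-plane when `τ` does. -/
theorem neg_inv_mem_upperHalfPlane (τ : UpperHalfPlane) : 0 < (-1 / (τ : ℂ)).im := by
  rw [neg_div, Complex.neg_im, one_div, Complex.inv_im, neg_div, neg_neg]
  exact div_pos τ.2 (Complex.normSq_pos.mpr (UpperHalfPlane.ne_zero τ))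

theorem dedekindEta_eq_eta (τ : UpperHalfPlane) : dedekindEta τ = ModularForm.eta (τ : ℂ) := by
  simp only [dedekindEta, ModularForm.eta, ModularForm.eta_q_eq_pow, Function.Periodic.qParam]
  push_cast
  rfl

theorem log_div_I_upperHalfPlane (τ : UpperHalfPlane) :
    Complex.log ((τ : ℂ) / Complex.I) = Complex.log (τ : ℂ) - Complex.log Complex.I := by
  have hpos : 0 ≤ Complex.arg (τ : ℂ) := Complex.arg_nonneg_iff.mpr τ.2.le
  have hle := Complex.arg_le_pi (τ : ℂ)
  have hpi := Real.pi_pos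
  have h0 := UpperHalfPlane.ne_zero τ
  have e : (τ : ℂ) / Complex.I =
      Complex.exp (Complex.log (τ : ℂ) - Complex.log Complex.I) := by
    rw [Complex.exp_sub, Complex.exp_log h0, Complex.exp_log Complex.I_ne_zero]
  rw [e, Complex.log_exp]
  · simp only [Complex.sub_im, Complex.log_im, Complex.arg_I]
    linarith
  · simp only [Complex.sub_im, Complex.log_im, Complex.arg_I]
    linarith

/-- `η(−1/τ) = (τ/i)^{1/2}·η(τ)`, with the principal branch of the square root
(given by the principal branch of `Complex.cpow`). -/
theorem dedekindEta_functional_equation (τ : UpperHalfPlane) :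
    dedekindEta ⟨-1 / (τ : ℂ), neg_inv_mem_upperHalfPlane τ⟩ =
      ((τ : ℂ) / Complex.I) ^ (1 / 2 : ℂ) * dedekindEta τ := by
  have h := ModularForm.eta_comp_eq_csqrt_I_inv τ.2
  simp only [Function.comp_apply, Pi.smul_apply, Pi.mul_apply, smul_eq_mul] at h
  rw [dedekindEta_eq_eta, dedekindEta_eq_eta]
  refine h.trans ?_
  have h0 := UpperHalfPlane.ne_zero τ
  have hI := Complex.I_ne_zero
  rw [← mul_assoc, Complex.cpow_def_of_ne_zero (div_ne_zero h0 hI), log_div_I_upperHalfPlane,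
    _root_.sqrt_eq_exp h0, _root_.sqrt_eq_exp hI, ← Complex.exp_neg, ← Complex.exp_add]
  congr 2
  ring
end

section
/- Let F be a cusp form of weight k for SL₂(ℤ) with Fourier expansion F(τ) = ∑_{n≥1} a(n)·q^n, and let L(F,s) = ∑_{n≥1} a(n)·n^{−s}. Then there is an entire function Λ: ℂ → ℂ, given by Λ(s) = ∫₁^∞ F(it)·(t^{s−1} + i^k·t^{k−1−s}) dt, such that Λ(s) = (2π)^{−s}·Γ(s)·L(F,s) for all s with Re(s) > k/2 + 1 (so L(F,s) has holomorphic continuation to all of ℂ), and Λ satisfies the functional equation Λ(k−s) = i^{−k}·Λ(s) for all s ∈ ℂ. -/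
open Complex UpperHalfPlane MeasureTheory

open scoped MatrixGroups

/-- The extension by `0` of a function on the upper half-plane to all of `ℂ`. -/
noncomputable def extendByZero (F : UpperHalfPlane → ℂ) : ℂ → ℂ := fun z =>
  if h : 0 < z.im then F ⟨z, h⟩ else 0

/-- The completed `L`-function `Λ(s) = ∫₁^∞ F(it)·(t^{s−1} + i^k·t^{k−1−s}) dt`. -/
noncomputable def completedL (k : ℤ) (F : UpperHalfPlane → ℂ) (s : ℂ) : ℂ :=
  ∫ t in Set.Ioi (1 : ℝ),
    extendByZero F ((t : ℂ) * Complex.I) *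
      ((t : ℂ) ^ (s - 1) + Complex.I ^ k * (t : ℂ) ^ ((k : ℂ) - 1 - s))

lemma aux_even_or_zero {k : ℤ} (f : CuspForm 𝒮ℒ k) :
    (⇑f = (0 : UpperHalfPlane → ℂ)) ∨ (0 < k ∧ Even k) := by
  by_cases hk : k < 12
  · left
    have := rank_zero_iff_forall_zero.mp (CuspForm.rank_eq_zero_of_weight_lt_twelve hk) f
    rw [this]; rfl
  · rcases Int.even_or_odd k with h | h
    · exact Or.inr ⟨by omega, h⟩
    · left
      have h0 := ModularForm.levelOne_odd_weight_eq_zero h (ModularFormClass.modularForm f)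
      ext τ
      exact DFunLike.congr_fun h0 τ

lemma completedL_zero (k : ℤ) : completedL k (0 : UpperHalfPlane → ℂ) = 0 := by
  ext s
  simp [completedL, extendByZero]

lemma aux_translate {k : ℤ} (f : CuspForm 𝒮ℒ k) (τ : UpperHalfPlane) :
    ModularForm.translate f ModularGroup.S τ = f τ := by
  rw [ModularForm.coe_translate]
  exact congrFun (SlashInvariantFormClass.slash_action_eq f _ ⟨ModularGroup.S, rfl⟩) τ

lemma aux_feq {k : ℤ} (hk : 0 < k) (f : CuspForm 𝒮ℒ k) {x : ℝ} (hx : 0 < x) :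
    f (ofComplex (Complex.I * ((x⁻¹ : ℝ) : ℂ))) =
      Complex.I ^ k * (x : ℂ) ^ (k : ℂ) * f (ofComplex (Complex.I * x)) := by
  have := (ModularForm.weakFEPair hk f).h_feq x hx
  simp only [ModularForm.weakFEPair, aux_translate, smul_eq_mul, one_div] at this
  rw [this, Complex.ofReal_cpow hx.le]
  simp

lemma aux_completed {k : ℤ} (hk : 0 < k) (f : CuspForm 𝒮ℒ k) (s : ℂ) :
    completedL k f s = ModularForm.Λ hk f s := by
  set φ : ℝ → ℂ := fun t => f (ofComplex (Complex.I * t)) with hφ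
  set g : ℝ → ℂ := (Set.Ioi 1).indicator φ with hg
  have hconv : ∀ s, MellinConvergent φ s := fun s =>
    ((CuspForm.isStrongFEPair hk f).hasMellin s).1
  have hconvg : ∀ s, MellinConvergent g s := by
    intro s
    have := (hconv s).indicator (measurableSet_Ioi (a := (1 : ℝ)))
    refine this.congr_fun (fun t _ => ?_) measurableSet_Ioi
    by_cases ht : t ∈ Set.Ioi (1 : ℝ) <;> simp [hg, ht]
  have hmg : ∀ s, mellin g s = ∫ t in Set.Ioi (1 : ℝ), (t : ℂ) ^ (s - 1) * φ t := by
    intro s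
    have : ∀ t : ℝ, (t : ℂ) ^ (s - 1) • g t =
        (Set.Ioi (1 : ℝ)).indicator (fun t : ℝ => (t : ℂ) ^ (s - 1) * φ t) t := by
      intro t
      by_cases ht : t ∈ Set.Ioi (1 : ℝ) <;> simp [hg, ht]
    simp_rw [mellin, this]
    rw [setIntegral_indicator measurableSet_Ioi, Set.inter_eq_right.mpr]
    exact Set.Ioi_subset_Ioi zero_le_one
  have hcg : ∀ s : ℂ, IntegrableOn (fun t : ℝ => (t : ℂ) ^ (s - 1) * φ t) (Set.Ioi 1) := fun s =>
    IntegrableOn.mono_set (hconv s) (Set.Ioi_subset_Ioi zero_le_one)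
  have h1 : completedL k f s = mellin g s + Complex.I ^ k * mellin g (k - s) := by
    rw [hmg, hmg, ← integral_const_mul, ← integral_add (hcg s) ((hcg _).const_mul _), completedL]
    refine setIntegral_congr_fun measurableSet_Ioi fun t (ht : 1 < t) => ?_
    have ht0 : 0 < t := by linarith
    have : extendByZero f ((t : ℂ) * Complex.I) = φ t := by
      have h' : 0 < ((t : ℂ) * Complex.I).im := by simpa using ht0
      rw [extendByZero, dif_pos h', hφ]
      simp only
      rw [mul_comm Complex.I, ofComplex_apply_of_im_pos h']
    simp only [this]
    rw [show (k : ℂ) - 1 - s = k - s - 1 by ring]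
    ring
  set h : ℝ → ℂ := fun t => Complex.I ^ k • ((t : ℂ) ^ (k : ℂ) • g t) with hh
  have h2 : mellin (fun t => h t⁻¹) s = Complex.I ^ k * mellin g (k - s) := by
    rw [mellin_comp_inv, hh, mellin_const_smul, mellin_cpow_smul, smul_eq_mul]
    ring_nf
  have hae : ∀ᵐ t ∂(volume.restrict (Set.Ioi (0 : ℝ))), φ t = g t + h t⁻¹ := by
    rw [ae_restrict_iff' measurableSet_Ioi]
    filter_upwards [compl_mem_ae_iff.mpr (measure_singleton (μ := volume) (1 : ℝ))]
      with t (ht1 : t ≠ 1) (ht0 : 0 < t)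
    rcases lt_or_gt_of_ne ht1 with hlt | hgt
    · have hi : 1 < t⁻¹ := (one_lt_inv₀ ht0).mpr hlt
      have := aux_feq hk f (inv_pos.mpr ht0)
      rw [inv_inv] at this
      simp only [hh, hg]
      rw [Set.indicator_of_notMem (by simpa using hlt.le), Set.indicator_of_mem (by simpa using hi)]
      simp only [hφ, smul_eq_mul, this]
      ring
    · have hi : t⁻¹ < 1 := (inv_lt_one₀ ht0).mpr hgt
      simp only [hh, hg]
      rw [Set.indicator_of_mem (by simpa using hgt), Set.indicator_of_notMem (by simpa using hi.le)]
      simp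
  have hconvh : MellinConvergent (fun t => h t⁻¹) s := by
    refine Integrable.congr ((hconv s).sub (hconvg s)) ?_
    filter_upwards [hae] with t ht
    simp only [Pi.sub_apply, ht, smul_eq_mul]
    ring
  rw [CuspForm.Λ_eq_mellin, h1, ← h2, ← (hasMellin_add (hconvg s) hconvh).2]
  refine integral_congr_ae ?_
  filter_upwards [hae] with t ht
  rw [← ht]

lemma aux_summable {a : ℕ → ℂ} {s : ℂ}
    (h : Summable fun n : ℕ => a (n + 1) * ((n + 1 : ℕ) : ℂ) ^ (-s)) {q : ℂ} (hq : ‖q‖ < 1) :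
    Summable fun n : ℕ => a (n + 1) * q ^ (n + 1) := by
  obtain ⟨m, hm⟩ := exists_nat_ge s.re
  have ht := tendsto_pow_const_mul_const_pow_of_abs_lt_one m (r := ‖q‖) (by simpa using hq)
  have hb := (ht.comp (Filter.tendsto_add_atTop_nat 1)).isBigO_one ℝ
  have hO : (fun n : ℕ => a (n + 1) * q ^ (n + 1)) =O[Filter.atTop]
      (fun n : ℕ => ‖a (n + 1) * ((n + 1 : ℕ) : ℂ) ^ (-s)‖ * (1 : ℝ)) := by
    refine Asymptotics.IsBigO.trans ?_ ((Asymptotics.isBigO_refl _ _).mul hb)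
    refine Asymptotics.isBigO_of_le _ fun n => ?_
    have hn : (0 : ℝ) < ((n + 1 : ℕ) : ℝ) := by positivity
    have hc : ‖((n + 1 : ℕ) : ℂ) ^ (-s)‖ = ((n + 1 : ℕ) : ℝ) ^ (-s.re) := by
      rw [← Complex.ofReal_natCast, Complex.norm_cpow_eq_rpow_re_of_pos hn]; simp
    simp only [Function.comp, norm_mul, norm_norm, norm_pow, hc]
    rw [Real.norm_of_nonneg (Real.rpow_nonneg hn.le _), Real.norm_of_nonneg hn.le, mul_assoc]
    refine mul_le_mul_of_nonneg_left ?_ (norm_nonneg _)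
    rw [← mul_assoc]
    refine le_mul_of_one_le_left (by positivity) ?_
    rw [← Real.rpow_natCast _ m, ← Real.rpow_add hn]
    exact Real.one_le_rpow (by push_cast; linarith [Nat.cast_nonneg (α := ℝ) n]) (by linarith)
  refine summable_of_isBigO_nat ?_ hO
  simpa using h.norm

lemma aux_zero {k : ℤ} (f : CuspForm 𝒮ℒ k) {y : ℝ} (hy : 0 < y)
    (h : ∀ τ : UpperHalfPlane, τ.im < y → f τ = 0) : ⇑f = (0 : UpperHalfPlane → ℂ) := by
  have hd : DifferentiableOn ℂ (f ∘ ofComplex) {z : ℂ | 0 < z.im} :=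
    UpperHalfPlane.mdifferentiable_iff.mp (CuspFormClass.holo f)
  have ho : IsOpen {z : ℂ | 0 < z.im} := isOpen_lt continuous_const Complex.continuous_im
  have hc : IsPreconnected {z : ℂ | 0 < z.im} := (convex_halfSpace_im_gt 0).isPreconnected
  have hz : (((y / 2 : ℝ) : ℂ) * Complex.I) ∈ {z : ℂ | 0 < z.im} := by simp [hy]
  have := (hd.analyticOnNhd ho).eqOn_zero_of_preconnected_of_eventuallyEq_zero hc hz (by
    have ho' : IsOpen {z : ℂ | z.im < y} := isOpen_lt Complex.continuous_im continuous_const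
    filter_upwards [ho.mem_nhds hz, ho'.mem_nhds (by simp; linarith)] with z hz1 hz2
    simp only [Function.comp, ofComplex_apply_of_im_pos hz1]
    exact h _ hz2)
  ext τ
  have := this τ.im_pos
  simpa using this

lemma aux_q (τ : UpperHalfPlane) :
    ‖Complex.exp (2 * (Real.pi : ℂ) * Complex.I * (τ : ℂ))‖ = Real.exp (-(2 * Real.pi * τ.im)) := by
  rw [Complex.norm_exp]
  simp

lemma main_SL (k : ℤ)
    (F : CuspForm 𝒮ℒ k) (a : ℕ → ℂ)
    (hF : ∀ τ : UpperHalfPlane,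
      F τ = ∑' n : ℕ, a (n + 1) *
        Complex.exp (2 * (Real.pi : ℂ) * Complex.I * (τ : ℂ)) ^ (n + 1)) :
    Differentiable ℂ (completedL k F) ∧
    (∀ s : ℂ, (k : ℝ) / 2 + 1 < s.re →
      completedL k F s =
        (2 * (Real.pi : ℂ)) ^ (-s) * Complex.Gamma s *
          ∑' n : ℕ, a (n + 1) * ((n + 1 : ℕ) : ℂ) ^ (-s)) ∧
    (∀ s : ℂ, completedL k F ((k : ℂ) - s) = Complex.I ^ (-k) * completedL k F s) := by
  refine ⟨?_, ?_, ?_⟩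
  · rcases aux_even_or_zero F with h0 | ⟨hk, -⟩
    · rw [h0, completedL_zero]
      exact differentiable_const 0
    · rw [show completedL k F = ModularForm.Λ hk F from funext (aux_completed hk F)]
      exact CuspForm.differentiable_Λ hk F
  · intro s hs
    by_cases hsum : ∀ τ : UpperHalfPlane, Summable fun n : ℕ => a (n + 1) *
        Complex.exp (2 * (Real.pi : ℂ) * Complex.I * (τ : ℂ)) ^ (n + 1)
    · set c : ℕ → ℂ := fun n => if n = 0 then 0 else a n with hc
      have hc1 : ∀ n, c (n + 1) = a (n + 1) := fun n => by simp [hc]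
      have hcoef : ∀ n, c n = (qExpansion 1 F).coeff n := by
        refine ModularFormClass.qExpansion_coeff_unique (Γ := 𝒮ℒ) (k := k) one_pos
          one_mem_strictPeriods_SL fun τ => ?_
        rw [← hasSum_nat_add_iff' 1]
        have := (hsum τ).hasSum
        rw [← hF τ] at this
        simpa [hc, Function.Periodic.qParam] using this
      rcases aux_even_or_zero F with h0 | ⟨hk, -⟩
      · have : ∀ n, a (n + 1) = 0 := by
          intro n
          rw [← hc1, hcoef, h0, qExpansion_zero]
          simp
        rw [h0, completedL_zero]
        simp [this]
      · rw [aux_completed hk]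
        have := CuspForm.hasSum_Λ F hk hs
        rw [Subgroup.strictWidthInfty_SL2Z, ← hasSum_nat_add_iff' 1] at this
        have h2 := this.tsum_eq
        simp only [Finset.sum_range_one, ← hcoef, hc1] at h2
        simp only [hc, if_true, mul_zero, zero_div, sub_zero] at h2
        rw [← h2, ← tsum_mul_left]
        refine tsum_congr fun n => ?_
        have e : ((2 * ((n + 1 : ℕ) : ℝ) / 1 : ℝ) : ℂ) ^ s = (2 : ℂ) ^ s * ((n + 1 : ℕ) : ℂ) ^ s := by
          rw [div_one, ← Complex.ofReal_ofNat, ← Complex.ofReal_natCast, Complex.ofReal_mul,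
            Complex.mul_cpow_ofReal_nonneg zero_le_two (Nat.cast_nonneg _)]
        have e2 : (2 * (Real.pi : ℂ)) ^ (-s) = (2 : ℂ) ^ (-s) * (Real.pi : ℂ) ^ (-s) := by
          rw [← Complex.ofReal_ofNat,
            Complex.mul_cpow_ofReal_nonneg zero_le_two Real.pi_pos.le]
        rw [e, e2, Complex.cpow_neg 2, Complex.cpow_neg ((n + 1 : ℕ) : ℂ)]
        simp only [div_eq_mul_inv, mul_inv]
        ring
    · push Not at hsum
      obtain ⟨τ, hτ⟩ := hsum
      have h0 : ⇑F = (0 : UpperHalfPlane → ℂ) := by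
        refine aux_zero F τ.im_pos fun τ' hlt => ?_
        rw [hF τ']
        refine tsum_eq_zero_of_not_summable fun hsm => hτ ?_
        refine Summable.of_norm_bounded hsm.norm fun n => ?_
        simp only [norm_mul, norm_pow, aux_q]
        gcongr
      have hq : ‖Complex.exp (2 * (Real.pi : ℂ) * Complex.I * (τ : ℂ))‖ < 1 := by
        rw [aux_q, Real.exp_lt_one_iff]
        have := τ.im_pos
        have := Real.pi_pos
        simp; positivity
      rw [h0, completedL_zero, tsum_eq_zero_of_not_summable fun h => hτ (aux_summable h hq)]
      simp
  · intro s
    rcases aux_even_or_zero F with h0 | ⟨hk, he⟩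
    · rw [h0, completedL_zero]
      simp
    · rw [aux_completed hk, aux_completed hk]
      have h1 := (ModularForm.weakFEPair hk F).functional_equation s
      rw [(CuspForm.isStrongFEPair hk F).symm_Λ_eq] at h1
      have hg : (ModularForm.weakFEPair hk F).g = fun t : ℝ => F (ofComplex (Complex.I * t)) := by
        ext t
        exact aux_translate F _
      rw [hg, ← CuspForm.Λ_eq_mellin hk F] at h1
      have h2 : Complex.I ^ (-k) = Complex.I ^ k := by
        obtain ⟨m, rfl⟩ := he
        rw [zpow_neg, ← inv_zpow, Complex.inv_I, Even.neg_zpow ⟨m, rfl⟩]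
      rw [h2]
      simpa [ModularForm.weakFEPair, ModularForm.Λ] using h1

/-- If `F` is a cusp form of weight `k` for `SL₂(ℤ)` with Fourier coefficients `a(n)` and
`L(F,s) = ∑_{n≥1} a(n) n^{−s}`, then `Λ(s) = ∫₁^∞ F(it)(t^{s−1} + i^k t^{k−1−s}) dt` is entire,
agrees with `(2π)^{−s}·Γ(s)·L(F,s)` for `Re s > k/2 + 1` (giving the holomorphic continuation
of `L(F,s)` to all of `ℂ`), and satisfies the functional equation `Λ(k−s) = i^{−k}·Λ(s)`. -/
theorem cuspform_functional_equation (k : ℤ)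
    (F : CuspForm (⊤ : Subgroup SL(2, ℤ)) k) (a : ℕ → ℂ)
    (hF : ∀ τ : UpperHalfPlane,
      F τ = ∑' n : ℕ, a (n + 1) *
        Complex.exp (2 * (Real.pi : ℂ) * Complex.I * (τ : ℂ)) ^ (n + 1)) :
    Differentiable ℂ (completedL k F) ∧
    (∀ s : ℂ, (k : ℝ) / 2 + 1 < s.re →
      completedL k F s =
        (2 * (Real.pi : ℂ)) ^ (-s) * Complex.Gamma s *
          ∑' n : ℕ, a (n + 1) * ((n + 1 : ℕ) : ℂ) ^ (-s)) ∧
    (∀ s : ℂ, completedL k F ((k : ℂ) - s) = Complex.I ^ (-k) * completedL k F s) := by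
  have key : ∀ (G : Subgroup (GL (Fin 2) ℝ)) (hG : G = 𝒮ℒ) (F : CuspForm G k),
      ∃ F' : CuspForm 𝒮ℒ k, ⇑F' = ⇑F := by
    rintro G rfl F
    exact ⟨F, rfl⟩
  obtain ⟨F', h'⟩ := key _ (MonoidHom.range_eq_map _).symm F
  have := main_SL k F' a (by rw [h']; exact hF)
  rwa [h'] at this
end
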